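/- arXiv:2209.10400 — 2 statements merged into one kernel-verified Lean document; each statement's English description precedes it below -/
import Mathlib

section
/- Let T be a finite tree rooted at r, let p ≥ 2·h(T), and let k ≥ 1. There exists an optimal solution of the Min-Time problem with k robots, i.e. a feasible covering 𝓘 together with a partition of 𝓘 into k parts S_1,…,S_k minimizing max_{1≤i≤k} Σ_{I∈S_i} C(I), such that every leaf of every immersion I ∈ 𝓘 is a leaf of T. -/
/-!
A leaf `v ≠ r` of an immersion `I` that is not a leaf of the tree has a tree neighbour `w` outside
`I`, since connected subgraphs of a forest are induced. The path from `r` to `v` stays in `I`, so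
it extends to the path from `r` to `w`; any immersion covering `w` therefore covers `v` as well,
and deleting `v` from `I` keeps the covering feasible. The pruned immersion inherits the robot of
`I`, so no load grows while the total cost drops. Hence every feasible covering, in particular an
optimal one, can be pruned until no such leaf is left.
-/

open SimpleGraph Finset

/-- Cost of a subgraph-immersion: twice the number of its edges. -/
noncomputable def immCost {V : Type*} {G : SimpleGraph V} (I : G.Subgraph) : ℕ :=
  2 * I.edgeSet.ncard

/-- An immersion is a connected subgraph of `G` containing the root `r`. -/
def IsImmersion {V : Type*} {G : SimpleGraph V} (r : V) (I : G.Subgraph) : Prop :=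
  I.Connected ∧ r ∈ I.verts

/-- Height of the rooted tree: maximum distance from the root. -/
noncomputable def treeHeight {V : Type*} [Fintype V] (G : SimpleGraph V) (r : V) : ℕ :=
  Finset.univ.sup (fun v => G.dist r v)

/-- A leaf of the rooted tree: a vertex `v ≠ r` of degree 1. -/
def IsTreeLeaf {V : Type*} (G : SimpleGraph V) (r v : V) : Prop :=
  v ≠ r ∧ (G.neighborSet v).ncard = 1

/-- A leaf of an immersion `I`: a vertex `v ≠ r` of degree 1 in `I`. -/
def IsImmLeaf {V : Type*} {G : SimpleGraph V} (r : V) (I : G.Subgraph) (v : V) : Prop :=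
  v ≠ r ∧ (I.neighborSet v).ncard = 1

/-- A feasible covering: a finite set of immersions, each of cost at most `p`,
whose vertex sets cover all vertices. -/
def IsFeasible {V : Type*} [Fintype V] {G : SimpleGraph V} (r : V) (p : ℕ)
    (𝓘 : Finset G.Subgraph) : Prop :=
  (∀ I ∈ 𝓘, IsImmersion r I ∧ immCost I ≤ p) ∧ (∀ v : V, ∃ I ∈ 𝓘, v ∈ I.verts)

/-- Total cost of a set of immersions. -/
noncomputable def totalCost {V : Type*} {G : SimpleGraph V} (𝓘 : Finset G.Subgraph) : ℕ :=
  ∑ I ∈ 𝓘, immCost I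

/-- Optimality for the Min-Distance problem. -/
def MinDistOptimal {V : Type*} [Fintype V] {G : SimpleGraph V} (r : V) (p : ℕ)
    (𝓘 : Finset G.Subgraph) : Prop :=
  IsFeasible r p 𝓘 ∧ ∀ 𝓙 : Finset G.Subgraph, IsFeasible r p 𝓙 → totalCost 𝓘 ≤ totalCost 𝓙

/-- Makespan (maximum collective time) of an assignment `a` of immersions to `k` robots. -/
noncomputable def makespan {V : Type*} {G : SimpleGraph V} (k : ℕ)
    (𝓘 : Finset G.Subgraph) (a : G.Subgraph → Fin k) : ℕ :=
  Finset.univ.sup (fun i : Fin k => ∑ I ∈ 𝓘.filter (fun I => a I = i), immCost I)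

/-- Optimality for the Min-Time problem with `k` robots. -/
def MinTimeOptimal {V : Type*} [Fintype V] {G : SimpleGraph V} (r : V) (p k : ℕ)
    (𝓘 : Finset G.Subgraph) (a : G.Subgraph → Fin k) : Prop :=
  IsFeasible r p 𝓘 ∧ ∀ (𝓙 : Finset G.Subgraph) (b : G.Subgraph → Fin k),
    IsFeasible r p 𝓙 → makespan k 𝓘 a ≤ makespan k 𝓙 b

/-- Optimality for the Min-Immersions problem. -/
def MinImmOptimal {V : Type*} [Fintype V] {G : SimpleGraph V} (r : V) (p : ℕ)
    (𝓘 : Finset G.Subgraph) : Prop :=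
  IsFeasible r p 𝓘 ∧ ∀ 𝓙 : Finset G.Subgraph, IsFeasible r p 𝓙 → 𝓘.card ≤ 𝓙.card

section

variable {V : Type*} {G : SimpleGraph V} {H I J : G.Subgraph} {u v w r : V} {s : Set V} {p k : ℕ}

theorem preconnected_deleteVerts_of_subsingleton_neighborSet (hH : H.Preconnected)
    (hs : ∀ v ∈ s, (H.neighborSet v).Subsingleton) : (H.deleteVerts s).Preconnected := by
  have hind : (H.coe.induce {x | ↑x ∉ s}).Preconnected := by
    refine hH.coe.induce_of_degree_eq_one fun x hx y hy z hz => Subtype.ext ?_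
    exact hs x (not_not.1 hx) hy hz
  let φ : H.coe.induce {x | ↑x ∉ s} →g (H.deleteVerts s).coe :=
    { toFun := fun x => ⟨x.1, x.1.2, x.2⟩
      map_rel' := fun {x y} hxy => Subgraph.deleteVerts_adj.2 ⟨x.1.2, x.2, y.1.2, y.2, hxy⟩ }
  exact ⟨hind.map φ fun y => ⟨⟨⟨y, y.2.1⟩, y.2.2⟩, rfl⟩⟩

theorem toSubgraph_le_of_isAcyclic_of_isPath (hG : G.IsAcyclic) (hH : H.Preconnected)
    {q : G.Walk u v} (hq : q.IsPath) (hu : u ∈ H.verts) (hv : v ∈ H.verts) : q.toSubgraph ≤ H := by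
  classical
  obtain ⟨q', hq'⟩ := (Subgraph.preconnected_iff_forall_exists_walk_subgraph H).1 hH hu hv
  have hqq' : q = q'.bypass :=
    congrArg Subtype.val
      ((hG.subsingleton_path u v).elim ⟨q, hq⟩ ⟨q'.bypass, q'.bypass_isPath⟩)
  exact hqq' ▸ Walk.toSubgraph_bypass_le_toSubgraph.trans hq'

theorem isInduced_of_isAcyclic_of_preconnected (hG : G.IsAcyclic) (hH : H.Preconnected) :
    H.IsInduced :=
  fun _ hv _ hw hvw =>
    (toSubgraph_le_of_isAcyclic_of_isPath hG hH (Walk.IsPath.of_adj hvw) hv hw).2 (by simp)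

theorem mem_verts_of_adj_of_notMem_verts (hG : G.IsAcyclic) (hI : I.Preconnected)
    (hJ : J.Preconnected) (hrI : r ∈ I.verts) (hrJ : r ∈ J.verts) (hvw : G.Adj v w)
    (hvI : v ∈ I.verts) (hwI : w ∉ I.verts) (hwJ : w ∈ J.verts) : v ∈ J.verts := by
  classical
  obtain ⟨q, hqI⟩ := (Subgraph.preconnected_iff_forall_exists_walk_subgraph I).1 hI hrI hvI
  have hwq : w ∉ q.bypass.support := fun hw =>
    hwI (hqI.1 (q.mem_verts_toSubgraph.2 (q.support_bypass_subset_support hw)))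
  have hpath : (q.bypass.concat hvw).IsPath := q.bypass_isPath.concat hwq hvw
  refine (toSubgraph_le_of_isAcyclic_of_isPath hG hJ hpath hrJ hwJ).1 ?_
  simp

theorem immCost_deleteVerts_lt (hI : I.edgeSet.Finite) (hvu : I.Adj v u) (hv : v ∈ s) :
    immCost (I.deleteVerts s) < immCost I := by
  have hss : (I.deleteVerts s).edgeSet ⊂ I.edgeSet := by
    refine ⟨Subgraph.edgeSet_mono Subgraph.deleteVerts_le, fun h => ?_⟩
    have hvu' : (I.deleteVerts s).Adj v u := Subgraph.mem_edgeSet.1 (h hvu)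
    exact (Subgraph.deleteVerts_adj.1 hvu').2.1 hv
  exact Nat.mul_lt_mul_of_pos_left (Set.ncard_lt_ncard hss hI) two_pos

theorem immCost_toSubgraph_le (q : G.Walk u v) : immCost q.toSubgraph ≤ 2 * q.length := by
  classical
  have hedges : q.toSubgraph.edgeSet.ncard ≤ q.length := by
    rw [Walk.edgeSet_toSubgraph, ← Walk.coe_edges_toFinset, Set.ncard_coe_finset, ← q.length_edges]
    exact q.edges.toFinset_card_le
  exact Nat.mul_le_mul_left 2 hedges

theorem makespan_comp_le {𝓘 𝓙 : Finset G.Subgraph} {σ : G.Subgraph → G.Subgraph}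
    (hmaps : Set.MapsTo σ 𝓙 𝓘) (hinj : Set.InjOn σ 𝓙)
    (hcost : ∀ J ∈ 𝓙, immCost J ≤ immCost (σ J)) (a : G.Subgraph → Fin k) :
    makespan k 𝓙 (a ∘ σ) ≤ makespan k 𝓘 a := by
  classical
  refine Finset.sup_mono_fun fun i _ => ?_
  calc ∑ J ∈ 𝓙 with a (σ J) = i, immCost J
      ≤ ∑ J ∈ 𝓙 with a (σ J) = i, immCost (σ J) :=
        sum_le_sum fun J hJ => hcost J (mem_of_mem_filter J hJ)
    _ = ∑ I ∈ ({J ∈ 𝓙 | a (σ J) = i}).image σ, immCost I :=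
        (sum_image (hinj.mono (coe_subset.2 (filter_subset _ _)))).symm
    _ ≤ ∑ I ∈ 𝓘 with a I = i, immCost I := by
        refine sum_le_sum_of_subset (image_subset_iff.2 fun J hJ => ?_)
        obtain ⟨hJ, hi⟩ := mem_filter.1 hJ
        exact mem_filter.2 ⟨hmaps hJ, hi⟩

theorem exists_makespan_insert_erase_le [DecidableEq G.Subgraph] {𝓘 : Finset G.Subgraph}
    (hI : I ∈ 𝓘) (hJI : immCost J ≤ immCost I) (a : G.Subgraph → Fin k) :
    ∃ b, makespan k (insert J (𝓘.erase I)) b ≤ makespan k 𝓘 a := by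
  -- `J` may already belong to `𝓘.erase I`, and then it keeps its robot.
  let σ : G.Subgraph → G.Subgraph := fun K => if K ∈ 𝓘.erase I then K else I
  refine ⟨a ∘ σ, makespan_comp_le ?maps ?inj ?cost a⟩
  case maps => intro K; grind
  case inj => intro K hK L hL; grind
  case cost => grind

theorem IsImmLeaf.exists_adj (hv : IsImmLeaf r I v) : ∃ u, I.Adj v u :=
  Set.nonempty_of_ncard_ne_zero (hv.2.trans_ne one_ne_zero)

theorem IsImmLeaf.exists_adj_notMem_verts (hv : IsImmLeaf r I v) (hI : I.IsInduced)
    (hvG : ¬ IsTreeLeaf G r v) : ∃ w, G.Adj v w ∧ w ∉ I.verts := by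
  by_contra! hnbr
  obtain ⟨u, hvu⟩ := hv.exists_adj
  have hNbr : G.neighborSet v = I.neighborSet v :=
    Set.Subset.antisymm (fun w hvw => hI hvu.fst_mem (hnbr w hvw) hvw) (I.neighborSet_subset v)
  exact hvG ⟨hv.1, hNbr ▸ hv.2⟩

theorem IsImmersion.deleteVerts_singleton (hI : IsImmersion r I) (hv : IsImmLeaf r I v) :
    IsImmersion r (I.deleteVerts {v}) := by
  have hr : r ∈ (I.deleteVerts {v}).verts := ⟨hI.2, hv.1.symm⟩
  have hpre : (I.deleteVerts {v}).Preconnected := by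
    refine preconnected_deleteVerts_of_subsingleton_neighborSet hI.1.preconnected ?_
    rintro _ rfl
    obtain ⟨u, hu⟩ := Set.ncard_eq_one.1 hv.2
    exact hu ▸ Set.subsingleton_singleton
  exact ⟨Subgraph.connected_iff.2 ⟨hpre, r, hr⟩, hr⟩

variable [Fintype V] {𝓘 : Finset G.Subgraph}

theorem exists_isFeasible (hG : G.Connected) (hp : 2 * treeHeight G r ≤ p) :
    ∃ 𝓘 : Finset G.Subgraph, IsFeasible r p 𝓘 := by
  classical
  choose q hq using fun v => hG.exists_walk_length_eq_dist r v
  have hcost (v : V) : immCost (q v).toSubgraph ≤ p :=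
    calc immCost (q v).toSubgraph
        ≤ 2 * (q v).length := immCost_toSubgraph_le (q v)
      _ = 2 * G.dist r v := by rw [hq]
      _ ≤ 2 * treeHeight G r := Nat.mul_le_mul_left 2 (le_sup (f := G.dist r) (mem_univ v))
      _ ≤ p := hp
  refine ⟨univ.image fun v => (q v).toSubgraph, ?_, fun v => ⟨(q v).toSubgraph, by simp⟩⟩
  simp only [mem_image, mem_univ, true_and, forall_exists_index, forall_apply_eq_imp_iff]
  exact fun v => ⟨⟨(q v).toSubgraph_connected, by simp⟩, hcost v⟩

theorem exists_minTimeOptimal [Nonempty (Fin k)]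
    (h : ∃ 𝓘 : Finset G.Subgraph, IsFeasible r p 𝓘) :
    ∃ (𝓘 : Finset G.Subgraph) (a : G.Subgraph → Fin k), MinTimeOptimal r p k 𝓘 a := by
  obtain ⟨𝓘₀, h₀⟩ := h
  let feasible : Set (Finset G.Subgraph × (G.Subgraph → Fin k)) := {s | IsFeasible r p s.1}
  have hne : feasible.Nonempty := ⟨(𝓘₀, Classical.arbitrary _), h₀⟩
  let load : Finset G.Subgraph × (G.Subgraph → Fin k) → ℕ := fun s => makespan k s.1 s.2
  let best := Function.argminOn load feasible hne
  exact ⟨best.1, best.2, Function.argminOn_mem load feasible hne,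
    fun 𝓙 b h𝓙 => Function.argminOn_le load feasible (a := (𝓙, b)) h𝓙⟩

theorem IsFeasible.insert_erase [DecidableEq G.Subgraph] (h : IsFeasible r p 𝓘)
    (hJ : IsImmersion r J) (hJp : immCost J ≤ p)
    (hcover : ∀ x ∈ I.verts, x ∈ J.verts ∨ ∃ K ∈ 𝓘, K ≠ I ∧ x ∈ K.verts) :
    IsFeasible r p (insert J (𝓘.erase I)) := by
  refine ⟨?_, fun x => ?_⟩
  · rw [forall_mem_insert]
    exact ⟨⟨hJ, hJp⟩, fun K hK => h.1 K (mem_of_mem_erase hK)⟩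
  · simp only [exists_mem_insert, mem_erase, and_assoc]
    obtain ⟨K, hK, hxK⟩ := h.2 x
    by_cases hKI : K = I
    · subst hKI
      grind
    · exact Or.inr ⟨K, hKI, hK, hxK⟩

theorem IsFeasible.exists_ne_mem_verts (h : IsFeasible r p 𝓘) (hG : G.IsAcyclic) (hI : I ∈ 𝓘)
    (hv : IsImmLeaf r I v) (hvG : ¬ IsTreeLeaf G r v) : ∃ J ∈ 𝓘, J ≠ I ∧ v ∈ J.verts := by
  obtain ⟨⟨hIconn, hrI⟩, -⟩ := h.1 I hI
  obtain ⟨u, hvu⟩ := hv.exists_adj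
  obtain ⟨w, hvw, hwI⟩ :=
    hv.exists_adj_notMem_verts (isInduced_of_isAcyclic_of_preconnected hG hIconn.preconnected) hvG
  obtain ⟨J, hJ, hwJ⟩ := h.2 w
  obtain ⟨⟨hJconn, hrJ⟩, -⟩ := h.1 J hJ
  exact ⟨J, hJ, fun hJI => hwI (hJI ▸ hwJ), mem_verts_of_adj_of_notMem_verts hG
    hIconn.preconnected hJconn.preconnected hrI hrJ hvw hvu.fst_mem hwI hwJ⟩

theorem IsFeasible.exists_makespan_le_totalCost_lt (h : IsFeasible r p 𝓘) (hG : G.IsAcyclic)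
    (hI : I ∈ 𝓘) (hv : IsImmLeaf r I v) (hvG : ¬ IsTreeLeaf G r v) (a : G.Subgraph → Fin k) :
    ∃ (𝓙 : Finset G.Subgraph) (b : G.Subgraph → Fin k),
      IsFeasible r p 𝓙 ∧ makespan k 𝓙 b ≤ makespan k 𝓘 a ∧ totalCost 𝓙 < totalCost 𝓘 := by
  classical
  obtain ⟨hIimm, hIp⟩ := h.1 I hI
  obtain ⟨u, hvu⟩ := hv.exists_adj
  have hlt : immCost (I.deleteVerts {v}) < immCost I :=
    immCost_deleteVerts_lt (Set.toFinite _) hvu rfl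
  obtain ⟨b, hb⟩ := exists_makespan_insert_erase_le hI hlt.le a
  refine ⟨insert (I.deleteVerts {v}) (𝓘.erase I), b, ?feasible, hb, ?cheaper⟩
  case feasible =>
    refine h.insert_erase (hIimm.deleteVerts_singleton hv) (hlt.le.trans hIp) fun x hxI => ?_
    rcases eq_or_ne x v with rfl | hxv
    · exact Or.inr (h.exists_ne_mem_verts hG hI hv hvG)
    · exact Or.inl ⟨hxI, hxv⟩
  case cheaper =>
    refine sum_lt_sum_of_subset_erase_union_singleton hI ?_ hlt
    rw [union_singleton]

theorem IsFeasible.exists_makespan_le_forall_isTreeLeaf (h : IsFeasible r p 𝓘) (hG : G.IsAcyclic)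
    (a : G.Subgraph → Fin k) :
    ∃ (𝓙 : Finset G.Subgraph) (b : G.Subgraph → Fin k),
      IsFeasible r p 𝓙 ∧ makespan k 𝓙 b ≤ makespan k 𝓘 a ∧
      ∀ J ∈ 𝓙, ∀ v, IsImmLeaf r J v → IsTreeLeaf G r v := by
  induction hcost : totalCost 𝓘 using Nat.strong_induction_on generalizing 𝓘 a with
  | h _ ih =>
    by_cases hleaf : ∀ I ∈ 𝓘, ∀ v, IsImmLeaf r I v → IsTreeLeaf G r v
    · exact ⟨𝓘, a, h, le_rfl, hleaf⟩
    · push Not at hleaf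
      obtain ⟨I, hI, v, hv, hvG⟩ := hleaf
      obtain ⟨𝓘', a', h', hle, hlt⟩ := h.exists_makespan_le_totalCost_lt hG hI hv hvG a
      obtain ⟨𝓙, b, h𝓙, hle', hleaf⟩ := ih _ (hcost ▸ hlt) h' a' rfl
      exact ⟨𝓙, b, h𝓙, hle'.trans hle, hleaf⟩

end

theorem stmt_1 {V : Type*} [Fintype V] (T : SimpleGraph V) (r : V) (p k : ℕ)
    (hT : T.IsTree) (hp : 2 * treeHeight T r ≤ p) (hk : 1 ≤ k) :
    ∃ (𝓘 : Finset T.Subgraph) (a : T.Subgraph → Fin k),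
      MinTimeOptimal r p k 𝓘 a ∧
      ∀ I ∈ 𝓘, ∀ v : V, IsImmLeaf r I v → IsTreeLeaf T r v := by
  have : Nonempty (Fin k) := ⟨⟨0, hk⟩⟩
  obtain ⟨𝓘, a, h𝓘, hmin⟩ := exists_minTimeOptimal (k := k) (exists_isFeasible hT.connected hp)
  obtain ⟨𝓙, b, h𝓙, hle, hleaf⟩ := h𝓘.exists_makespan_le_forall_isTreeLeaf hT.isAcyclic a
  exact ⟨𝓙, b, ⟨h𝓙, fun 𝓚 c h𝓚 => hle.trans (hmin 𝓚 c h𝓚)⟩, hleaf⟩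
end

section
/- There exist a finite tree T rooted at r and an integer p ≥ 2·h(T) such that the Min-Distance problem has two optimal solutions 𝓘 and 𝓘' (both feasible coverings achieving the minimum total cost) with |𝓘| ≠ |𝓘'|; that is, optimal Min-Distance solutions for the same instance need not have the same number of immersions. -/
/-!
All immersions contain the root, so the union of a feasible covering is a connected spanning
graph: it has at least `|V| - 1` edges, and every feasible covering costs at least `2 (|V| - 1)`.
In a tree this bound is attained by the whole tree as a single immersion, once `p` is large enough.
In a star rooted at its centre it is also attained by the `|V| - 1` single edges, and the two
coverings have different cardinalities as soon as there are two leaves.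
-/

open SimpleGraph Finset

section LowerBound

variable {V : Type*} {G : SimpleGraph V} {r : V}

lemma IsImmersion.reachable_spanningCoe {I : G.Subgraph} (hI : IsImmersion r I) {v : V}
    (hv : v ∈ I.verts) : I.spanningCoe.Reachable r v :=
  (hI.1.coe ⟨r, hI.2⟩ ⟨v, hv⟩).map I.coeEmbeddingSpanningCoe.toHom

lemma connected_spanningCoe_sSup_of_isImmersion {𝓘 : Set G.Subgraph}
    (himm : ∀ I ∈ 𝓘, IsImmersion r I) (hcover : ∀ v, ∃ I ∈ 𝓘, v ∈ I.verts) :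
    (sSup 𝓘).spanningCoe.Connected := by
  refine (connected_iff_exists_forall_reachable _).2 ⟨r, fun v => ?_⟩
  obtain ⟨I, hI, hv⟩ := hcover v
  exact ((himm I hI).reachable_spanningCoe hv).mono
    (Subgraph.spanningCoe_le_of_le (le_sSup hI))

lemma two_mul_ncard_edgeSet_sSup_le_totalCost (𝓘 : Finset G.Subgraph) :
    2 * (sSup (𝓘 : Set G.Subgraph)).edgeSet.ncard ≤ totalCost 𝓘 := by
  simp only [totalCost, immCost, ← Finset.mul_sum, Subgraph.edgeSet_sSup, Finset.mem_coe]
  exact Nat.mul_le_mul_left 2 (𝓘.set_ncard_biUnion_le _)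

variable [Fintype V] {p : ℕ} {𝓘 : Finset G.Subgraph}

lemma IsFeasible.two_mul_card_sub_one_le_totalCost (h : IsFeasible r p 𝓘) :
    2 * (Fintype.card V - 1) ≤ totalCost 𝓘 := by
  have hconn : (sSup (𝓘 : Set G.Subgraph)).spanningCoe.Connected :=
    connected_spanningCoe_sSup_of_isImmersion (fun I hI => (h.1 I hI).1) h.2
  have hedges : Fintype.card V ≤ (sSup (𝓘 : Set G.Subgraph)).edgeSet.ncard + 1 := by
    simpa only [Nat.card_eq_fintype_card, Subgraph.edgeSet_spanningCoe, Nat.card_coe_set_eq]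
      using hconn.card_vert_le_card_edgeSet_add_one
  have hcost := two_mul_ncard_edgeSet_sSup_le_totalCost 𝓘
  omega

lemma IsFeasible.minDistOptimal_of_totalCost_le (h : IsFeasible r p 𝓘)
    (hcost : totalCost 𝓘 ≤ 2 * (Fintype.card V - 1)) : MinDistOptimal r p 𝓘 :=
  ⟨h, fun _ h' => hcost.trans h'.two_mul_card_sub_one_le_totalCost⟩

end LowerBound

section WholeTree

variable {V : Type*} {G : SimpleGraph V}

lemma isImmersion_top (hG : G.Connected) (r : V) : IsImmersion r (⊤ : G.Subgraph) :=
  ⟨Subgraph.connected_iff'.2 (Subgraph.topIso.connected_iff.2 hG), Set.mem_univ r⟩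

variable [Fintype V]

lemma immCost_top_of_isTree (hG : G.IsTree) :
    immCost (⊤ : G.Subgraph) = 2 * (Fintype.card V - 1) := by
  classical
  have hedges : G.edgeSet.ncard + 1 = Fintype.card V := by
    rw [Set.ncard_eq_toFinset_card']
    exact hG.card_edgeFinset
  rw [immCost, Subgraph.edgeSet_top, ← hedges, Nat.add_sub_cancel]

lemma minDistOptimal_singleton_top (hG : G.IsTree) (r : V) {p : ℕ}
    (hp : 2 * (Fintype.card V - 1) ≤ p) : MinDistOptimal r p {(⊤ : G.Subgraph)} := by
  have hcost := immCost_top_of_isTree hG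
  have hfeasible : IsFeasible r p {(⊤ : G.Subgraph)} := by
    refine ⟨fun I hI => ?_, fun v => ⟨⊤, mem_singleton_self _, Set.mem_univ v⟩⟩
    rw [mem_singleton.1 hI]
    exact ⟨isImmersion_top hG.connected r, hcost.trans_le hp⟩
  exact hfeasible.minDistOptimal_of_totalCost_le (by rw [totalCost, sum_singleton, hcost])

end WholeTree

section Star

variable {V : Type*} (r : V)

/-- The spoke of the star centred at `r` that ends at the leaf `v`: the subgraph consisting of the
single edge `rv`. It is the smallest immersion that reaches `v`. -/
def starSpoke (v : {v : V // r ≠ v}) : (starGraph r).Subgraph :=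
  (starGraph r).subgraphOfAdj (starGraph_center_adj v.2)

lemma mem_verts_starSpoke {v : {v : V // r ≠ v}} {w : V} :
    w ∈ (starSpoke r v).verts ↔ w = r ∨ w = v :=
  Iff.rfl

lemma isImmersion_starSpoke (v : {v : V // r ≠ v}) : IsImmersion r (starSpoke r v) :=
  ⟨Subgraph.subgraphOfAdj_connected _, (mem_verts_starSpoke r).2 (.inl rfl)⟩

lemma immCost_starSpoke (v : {v : V // r ≠ v}) : immCost (starSpoke r v) = 2 := by
  rw [immCost, starSpoke, edgeSet_subgraphOfAdj, Set.ncard_singleton]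

lemma starSpoke_injective : Function.Injective (starSpoke r) := by
  intro v w h
  have hv : (v : V) ∈ (starSpoke r w).verts := h ▸ (mem_verts_starSpoke r).2 (.inr rfl)
  exact Subtype.ext (((mem_verts_starSpoke r).1 hv).resolve_left v.2.symm)

variable [Fintype V]

lemma treeHeight_starGraph_le_one : treeHeight (starGraph r) r ≤ 1 := by
  refine Finset.sup_le fun v _ => ?_
  obtain rfl | hv := eq_or_ne r v
  · rw [dist_self]
    exact zero_le_one
  · exact (dist_eq_one_iff_adj.2 (starGraph_center_adj hv)).le

variable [DecidableEq V]

/-- The covering of the star centred at `r` by all its spokes, one immersion per leaf. -/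
def starSpokes : Finset (starGraph r).Subgraph :=
  univ.map ⟨starSpoke r, starSpoke_injective r⟩

lemma starSpoke_mem_starSpokes (v : {v : V // r ≠ v}) : starSpoke r v ∈ starSpokes r :=
  mem_map_of_mem _ (mem_univ v)

lemma card_starSpokes : (starSpokes r).card = Fintype.card V - 1 := by
  simp only [starSpokes, card_map, card_univ, ne_eq, Fintype.card_subtype_compl,
    Fintype.card_unique]

lemma totalCost_starSpokes : totalCost (starSpokes r) = 2 * (Fintype.card V - 1) := by
  have hcost : ∀ I ∈ starSpokes r, immCost I = 2 :=
    forall_mem_map.2 fun v _ => immCost_starSpoke r v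
  rw [totalCost, sum_const_nat hcost, card_starSpokes, mul_comm]

lemma isFeasible_starSpokes [Nontrivial V] {p : ℕ} (hp : 2 ≤ p) :
    IsFeasible r p (starSpokes r) := by
  refine ⟨forall_mem_map.2 fun v _ =>
    ⟨isImmersion_starSpoke r v, (immCost_starSpoke r v).trans_le hp⟩, fun v => ?_⟩
  obtain rfl | hv := eq_or_ne r v
  · obtain ⟨w, hw⟩ := exists_ne r
    exact ⟨_, starSpoke_mem_starSpokes r ⟨w, hw.symm⟩, (mem_verts_starSpoke r).2 (.inl rfl)⟩
  · exact ⟨_, starSpoke_mem_starSpokes r ⟨v, hv⟩, (mem_verts_starSpoke r).2 (.inr rfl)⟩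

lemma minDistOptimal_starSpokes [Nontrivial V] {p : ℕ} (hp : 2 ≤ p) :
    MinDistOptimal r p (starSpokes r) :=
  (isFeasible_starSpokes r hp).minDistOptimal_of_totalCost_le (totalCost_starSpokes r).le

end Star

theorem stmt_12 :
    ∃ (V : Type) (inst : Fintype V) (T : SimpleGraph V) (r : V) (p : ℕ),
      T.IsTree ∧ 2 * @treeHeight V inst T r ≤ p ∧
      ∃ 𝓘 𝓘' : Finset T.Subgraph,
        @MinDistOptimal V inst T r p 𝓘 ∧ @MinDistOptimal V inst T r p 𝓘' ∧
        𝓘.card ≠ 𝓘'.card := by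
  refine ⟨Fin 3, inferInstance, starGraph 0, 0, 4, isTree_starGraph 0, ?_,
    {⊤}, starSpokes 0, ?_, ?_, ?_⟩
  · have hheight := treeHeight_starGraph_le_one (0 : Fin 3)
    omega
  · exact minDistOptimal_singleton_top (isTree_starGraph 0) 0 (by rw [Fintype.card_fin])
  · exact minDistOptimal_starSpokes 0 (by norm_num)
  · rw [card_singleton, card_starSpokes, Fintype.card_fin]
    norm_num
end
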